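/- Let p ≥ 1 be an integer and let W : ℝ → ℝ be bounded, of bounded variation, with W(x) = 0 for |x| ≥ 1 and ∫_ℝ W(α) dα = 1. Then there exists C > 0, depending only on W and p, such that for every integer T ≥ 2, every b ∈ (0, π/2), and every ω ∈ [0, 2π]: (2π/T) ∑_{s=0}^{T−1} |W_b(ω − u_s)| · |ω − u_s|^p ≤ C·(b^p + 1/(T·b)). -/

import Mathlib

/-- The periodized smoothing kernel `W_b(x) = (1/b) ∑_{k ∈ ℤ} W((x + 2kπ)/b)`. -/
noncomputable def Wper (W : ℝ → ℝ) (b x : ℝ) : ℝ :=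
  (1 / b) * ∑' k : ℤ, W ((x + 2 * (k : ℝ) * Real.pi) / b)

/-!
The nearest representative `ω - u s` is no longer than any other representative
`ω - u s + 2πk`, so `|W_b(ω - u s)| |ω - u s|^p` is at most `b⁻¹` times the sum over `k` of
`F y = |W(y/b)| |y|^p` at `y = ω - u s + 2πk`. As `s` and `k` vary these points run exactly once
through the lattice `ω + (2π/T)ℤ`. Since `0 ≤ F ≤ M b^p` and `F` vanishes off `(-b, b)`, which
contains at most `Tb/π + 1` lattice points, the total is at most
`(2π/T) b⁻¹ (Tb/π + 1) M b^p = 2M b^p + 2πM b^p/(Tb)`, and `b^p/(Tb) ≤ b^p + 1/(Tb)` because one of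
the two factors is at most `1`.
-/

lemma sum_range_tsum_int_mul_add {E : Type*} [AddCommGroup E] [UniformSpace E]
    [IsUniformAddGroup E] [CompleteSpace E] [T0Space E] {f : ℤ → E} (hf : Summable f)
    {T : ℕ} (hT : T ≠ 0) :
    ∑ s ∈ Finset.range T, ∑' k : ℤ, f (k * T + s) = ∑' m, f m := by
  have : NeZero T := ⟨hT⟩
  have hpairs : Summable fun q : ℤ × Fin T => f (q.1 * T + (q.2 : ℕ)) :=
    hf.comp_injective (Int.divModEquiv T).symm.injective
  calc ∑ s ∈ Finset.range T, ∑' k : ℤ, f (k * T + s)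
      = ∑ s : Fin T, ∑' k : ℤ, f (k * T + (s : ℕ)) :=
        Finset.sum_range fun s => ∑' k : ℤ, f (k * T + s)
    _ = ∑' k : ℤ, ∑ s : Fin T, f (k * T + (s : ℕ)) :=
        (Summable.tsum_finsetSum fun s _ =>
          hpairs.comp_injective (Prod.mk_left_injective s)).symm
    _ = ∑' q : ℤ × Fin T, f (q.1 * T + (q.2 : ℕ)) := by
        simp only [hpairs.tsum_prod, tsum_fintype]
    _ = ∑' m, f m := (Int.divModEquiv T).symm.tsum_eq f

section Lattice

variable {h r : ℝ}

lemma abs_add_int_mul_lt_iff (hh : h ≠ 0) (y : ℝ) (m : ℤ) :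
    |y + m * h| < r ↔ m ∈ Finset.Ioo ⌊-(y / h) - r / |h|⌋ ⌈-(y / h) + r / |h|⌉ := by
  have hfactor : y + m * h = (m - -(y / h)) * h := by field_simp; ring
  rw [hfactor, abs_mul, ← lt_div_iff₀ (abs_pos.mpr hh), abs_sub_lt_iff, Finset.mem_Ioo,
    Int.floor_lt, Int.lt_ceil]
  constructor <;> rintro ⟨_, _⟩ <;> constructor <;> linarith

lemma card_Ioo_floor_sub_ceil_add_le (x : ℝ) (hr : 0 ≤ r) :
    ((Finset.Ioo ⌊x - r⌋ ⌈x + r⌉).card : ℝ) ≤ 2 * r + 1 := by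
  have hcard : (((⌈x + r⌉ - ⌊x - r⌋ - 1).toNat : ℤ) : ℝ) ≤ 2 * r + 1 := by
    rw [Int.toNat_eq_max, Int.cast_max]
    push_cast
    refine max_le ?_ (by positivity)
    linarith [Int.ceil_lt_add_one (x + r), Int.lt_floor_add_one (x - r)]
  rw [Int.card_Ioo]
  exact_mod_cast hcard

lemma hasFiniteSupport_comp_add_int_mul {E : Type*} [Zero E] {F : ℝ → E}
    (hF : ∀ y, r ≤ |y| → F y = 0) (hh : h ≠ 0) (y : ℝ) :
    (fun m : ℤ => F (y + m * h)).HasFiniteSupport :=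
  (Finset.finite_toSet _).subset fun m hm =>
    (abs_add_int_mul_lt_iff hh y m).mp (lt_of_not_ge fun hr => hm (hF _ hr))

lemma tsum_comp_add_int_mul_le {F : ℝ → ℝ} {K : ℝ} (hr : 0 ≤ r)
    (hF : ∀ y, r ≤ |y| → F y = 0) (hFK : ∀ y, F y ≤ K) (hh : h ≠ 0) (y : ℝ) :
    ∑' m : ℤ, F (y + m * h) ≤ (2 * (r / |h|) + 1) * K := by
  have hK : 0 ≤ K := hF r (le_abs_self r) ▸ hFK r
  set near := Finset.Ioo ⌊-(y / h) - r / |h|⌋ ⌈-(y / h) + r / |h|⌉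
  calc ∑' m : ℤ, F (y + m * h)
      = ∑ m ∈ near, F (y + m * h) :=
        tsum_eq_sum fun m hm => hF _ (not_lt.mp (mt (abs_add_int_mul_lt_iff hh y m).mp hm))
    _ ≤ near.card * K := by
        simpa only [nsmul_eq_mul] using Finset.sum_le_card_nsmul near _ K fun m _ => hFK _
    _ ≤ (2 * (r / |h|) + 1) * K := by
        gcongr
        exact card_Ioo_floor_sub_ceil_add_le _ (by positivity)

end Lattice

lemma abs_le_abs_add_int_mul {c x : ℝ} (hx : |x| ≤ |c| / 2) (k : ℤ) :
    |x| ≤ |x + k * c| := by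
  rcases eq_or_ne c 0 with rfl | hc
  · simp
  calc |x| = ‖(x : AddCircle c)‖ := ((AddCircle.norm_coe_eq_abs_iff c hc).mpr hx).symm
    _ = ‖((x + k * c : ℝ) : AddCircle c)‖ := by
        rw [← zsmul_eq_mul, AddCircle.coe_add, AddCircle.coe_zsmul, AddCircle.coe_period]
        simp
    _ ≤ |x + k * c| := QuotientAddGroup.norm_mk_le_norm

/-- The integrand of the `p`-th absolute moment of the unperiodized kernel `b⁻¹ W(·/b)`, without
the factor `b⁻¹`; it majorizes the terms of the discretized moment. -/
noncomputable def kernelMoment (W : ℝ → ℝ) (b p y : ℝ) : ℝ :=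
  |W (y / b)| * |y| ^ p

section Kernel

variable {W : ℝ → ℝ} (hsupp : ∀ x : ℝ, 1 ≤ |x| → W x = 0) {b : ℝ} (hb : 0 < b)
include hsupp hb

lemma kernel_div_eq_zero_of_le_abs (y : ℝ) (hy : b ≤ |y|) : W (y / b) = 0 :=
  hsupp _ (by rwa [abs_div, abs_of_pos hb, one_le_div hb])

lemma kernelMoment_eq_zero_of_le_abs (p y : ℝ) (hy : b ≤ |y|) : kernelMoment W b p y = 0 := by
  rw [kernelMoment, kernel_div_eq_zero_of_le_abs hsupp hb y hy, abs_zero, zero_mul]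

lemma kernelMoment_le {M p : ℝ} (hM : ∀ x, |W x| ≤ M) (hp : 0 ≤ p) (y : ℝ) :
    kernelMoment W b p y ≤ M * b ^ p := by
  have hM0 : 0 ≤ M := (abs_nonneg _).trans (hM 0)
  rcases le_or_gt b |y| with hy | hy
  · rw [kernelMoment_eq_zero_of_le_abs hsupp hb p y hy]
    positivity
  · rw [kernelMoment]
    gcongr
    exact hM _

lemma abs_Wper_mul_rpow_le_tsum {p x : ℝ} (hp : 0 ≤ p) (hx : |x| ≤ Real.pi) :
    |Wper W b x| * |x| ^ p ≤ 1 / b * ∑' k : ℤ, kernelMoment W b p (x + k * (2 * Real.pi)) := by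
  have hkernel : Summable fun k : ℤ => ‖W ((x + k * (2 * Real.pi)) / b)‖ :=
    (summable_of_hasFiniteSupport <| hasFiniteSupport_comp_add_int_mul
      (kernel_div_eq_zero_of_le_abs hsupp hb) Real.two_pi_pos.ne' x).norm
  have hmoment : Summable fun k : ℤ => kernelMoment W b p (x + k * (2 * Real.pi)) :=
    summable_of_hasFiniteSupport <| hasFiniteSupport_comp_add_int_mul
      (kernelMoment_eq_zero_of_le_abs hsupp hb p) Real.two_pi_pos.ne' x
  have hnearest (k : ℤ) : |x| ≤ |x + k * (2 * Real.pi)| :=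
    abs_le_abs_add_int_mul
      (by rwa [abs_of_pos Real.two_pi_pos, mul_div_cancel_left₀ _ two_ne_zero]) k
  calc |Wper W b x| * |x| ^ p
      = 1 / b * (‖∑' k : ℤ, W ((x + k * (2 * Real.pi)) / b)‖ * |x| ^ p) := by
        rw [Wper, abs_mul, abs_of_pos (one_div_pos.mpr hb), mul_assoc, Real.norm_eq_abs]
        simp only [mul_comm, mul_left_comm]
    _ ≤ 1 / b * ((∑' k : ℤ, ‖W ((x + k * (2 * Real.pi)) / b)‖) * |x| ^ p) := by
        gcongr
        exact norm_tsum_le_tsum_norm hkernel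
    _ = 1 / b * ∑' k : ℤ, ‖W ((x + k * (2 * Real.pi)) / b)‖ * |x| ^ p := by
        rw [tsum_mul_right]
    _ ≤ 1 / b * ∑' k : ℤ, kernelMoment W b p (x + k * (2 * Real.pi)) := by
        gcongr with k
        · exact hkernel.mul_right _
        · exact mul_le_mul_of_nonneg_left
            (Real.rpow_le_rpow (abs_nonneg x) (hnearest k) hp) (abs_nonneg _)

end Kernel

lemma sum_range_tsum_frequency_grid {F : ℝ → ℝ} {T : ℕ} (hT : T ≠ 0) (ω : ℝ)
    (hF : Summable fun m : ℤ => F (ω + m * -(2 * Real.pi / T))) {u : ℕ → ℝ}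
    (hu : ∀ s < T, ∃ k : ℤ, u s = 2 * Real.pi * s / T + 2 * (k : ℝ) * Real.pi) :
    ∑ s ∈ Finset.range T, ∑' k : ℤ, F (ω - u s + k * (2 * Real.pi)) =
      ∑' m : ℤ, F (ω + m * -(2 * Real.pi / T)) := by
  rw [← sum_range_tsum_int_mul_add hF hT]
  refine Finset.sum_congr rfl fun s hs => ?_
  obtain ⟨j, hj⟩ := hu s (Finset.mem_range.mp hs)
  rw [← (Equiv.subLeft j).tsum_eq]
  congr! 3 with k
  rw [hj, Equiv.subLeft_apply]
  push_cast
  field_simp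
  ring

lemma sum_abs_Wper_mul_rpow_le {p : ℝ} (hp : 0 ≤ p) {W : ℝ → ℝ} {M : ℝ}
    (hM : ∀ x, |W x| ≤ M) (hsupp : ∀ x : ℝ, 1 ≤ |x| → W x = 0) {T : ℕ} (hT : T ≠ 0)
    {b : ℝ} (hb : 0 < b) (ω : ℝ) {u : ℕ → ℝ}
    (hu : ∀ s < T, (∃ k : ℤ, u s = 2 * Real.pi * s / T + 2 * (k : ℝ) * Real.pi) ∧
      |ω - u s| ≤ Real.pi) :
    ∑ s ∈ Finset.range T, |Wper W b (ω - u s)| * |ω - u s| ^ p ≤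
      1 / b * ((T * b / Real.pi + 1) * (M * b ^ p)) := by
  have hstep : -(2 * Real.pi / T) ≠ 0 := neg_ne_zero.mpr (by positivity)
  have hvanish := kernelMoment_eq_zero_of_le_abs hsupp hb p
  calc ∑ s ∈ Finset.range T, |Wper W b (ω - u s)| * |ω - u s| ^ p
      ≤ ∑ s ∈ Finset.range T,
          1 / b * ∑' k : ℤ, kernelMoment W b p (ω - u s + k * (2 * Real.pi)) :=
        Finset.sum_le_sum fun s hs =>
          abs_Wper_mul_rpow_le_tsum hsupp hb hp (hu s (Finset.mem_range.mp hs)).2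
    _ = 1 / b * ∑' m : ℤ, kernelMoment W b p (ω + m * -(2 * Real.pi / T)) := by
        rw [← Finset.mul_sum, sum_range_tsum_frequency_grid hT ω
          (summable_of_hasFiniteSupport (hasFiniteSupport_comp_add_int_mul hvanish hstep ω))
          fun s hs => (hu s hs).1]
    _ ≤ 1 / b * ((2 * (b / |-(2 * Real.pi / T)|) + 1) * (M * b ^ p)) := by
        gcongr
        exact tsum_comp_add_int_mul_le hb.le hvanish (kernelMoment_le hsupp hb hM hp) hstep ω
    _ = 1 / b * ((T * b / Real.pi + 1) * (M * b ^ p)) := by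
        rw [abs_neg, abs_of_pos (by positivity)]
        field_simp

lemma rpow_mul_one_div_mul_le_add {p b t : ℝ} (hp : 0 ≤ p) (hb : 0 < b) (ht : 1 ≤ t) :
    b ^ p * (1 / (t * b)) ≤ b ^ p + 1 / (t * b) := by
  have hbp : 0 ≤ b ^ p := by positivity
  have htb : 0 ≤ 1 / (t * b) := by positivity
  rcases le_total b 1 with hb1 | hb1
  · exact (mul_le_of_le_one_left htb (Real.rpow_le_one hb.le hb1 hp)).trans
      (le_add_of_nonneg_left hbp)
  · have htb1 : 1 / (t * b) ≤ 1 :=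
      (div_le_one₀ (by positivity)).mpr (one_le_mul_of_one_le_of_one_le ht hb1)
    exact (mul_le_of_le_one_right hbp htb1).trans (le_add_of_nonneg_right htb)

theorem kernel_riemann_sum_B_general {p : ℝ} (hp : 0 ≤ p) {W : ℝ → ℝ} {M : ℝ}
    (hM : ∀ x, |W x| ≤ M) (hsupp : ∀ x : ℝ, 1 ≤ |x| → W x = 0) {T : ℕ} (hT : T ≠ 0)
    {b : ℝ} (hb : 0 < b) (ω : ℝ) {u : ℕ → ℝ}
    (hu : ∀ s < T, (∃ k : ℤ, u s = 2 * Real.pi * s / T + 2 * (k : ℝ) * Real.pi) ∧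
      |ω - u s| ≤ Real.pi) :
    (2 * Real.pi / T) * ∑ s ∈ Finset.range T, |Wper W b (ω - u s)| * |ω - u s| ^ p ≤
      2 * (Real.pi + 1) * M * (b ^ p + 1 / (T * b)) := by
  have hM0 : 0 ≤ M := (abs_nonneg _).trans (hM 0)
  have hT1 : (1 : ℝ) ≤ T := by exact_mod_cast Nat.one_le_iff_ne_zero.mpr hT
  calc (2 * Real.pi / T) * ∑ s ∈ Finset.range T, |Wper W b (ω - u s)| * |ω - u s| ^ p
      ≤ (2 * Real.pi / T) * (1 / b * ((T * b / Real.pi + 1) * (M * b ^ p))) := by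
        gcongr
        exact sum_abs_Wper_mul_rpow_le hp hM hsupp hT hb ω hu
    _ = 2 * M * b ^ p + 2 * Real.pi * M * (b ^ p * (1 / (T * b))) := by field_simp
    _ ≤ 2 * M * (b ^ p + 1 / (T * b)) + 2 * Real.pi * M * (b ^ p + 1 / (T * b)) := by
        gcongr
        · exact le_add_of_nonneg_right (by positivity)
        · exact rpow_mul_one_div_mul_le_add hp hb hT1
    _ = 2 * (Real.pi + 1) * M * (b ^ p + 1 / (T * b)) := by ring

/-- **Riemann-sum kernel lemma, part (B).**
Let `W` be bounded, of bounded variation, supported in `[-1,1]`, with `∫ W = 1`.  Then there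
is `C > 0` (depending only on `W, p`) such that for all `T ≥ 2`, `b ∈ (0, π/2)`,
`ω ∈ [0, 2π]`, and any admissible choice of grid points `u`,
`(2π/T) ∑_{s<T} |W_b(ω - u s)| · |ω - u s|^p ≤ C·(b^p + 1/(T·b))`. -/
theorem kernel_riemann_sum_B (p : ℕ) (hp : 1 ≤ p) (W : ℝ → ℝ)
    (hWbd : ∃ M, ∀ x, |W x| ≤ M)
    (hBV : BoundedVariationOn W Set.univ)
    (hsupp : ∀ x : ℝ, 1 ≤ |x| → W x = 0)
    (hint : (∫ x, W x) = 1) :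
    ∃ C > (0 : ℝ), ∀ T : ℕ, 2 ≤ T → ∀ b : ℝ, 0 < b → b < Real.pi / 2 →
      ∀ ω ∈ Set.Icc (0 : ℝ) (2 * Real.pi),
      ∀ u : ℕ → ℝ,
        (∀ s < T, (∃ k : ℤ, u s = 2 * Real.pi * s / T + 2 * (k : ℝ) * Real.pi) ∧
          |ω - u s| ≤ Real.pi) →
        (2 * Real.pi / T) * ∑ s ∈ Finset.range T, |Wper W b (ω - u s)| * |ω - u s| ^ p ≤
          C * (b ^ p + 1 / (T * b)) := by
  obtain ⟨M, hM⟩ := hWbd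
  refine ⟨2 * (Real.pi + 1) * max M 1, by positivity, fun T hT b hb _ ω _ u hu => ?_⟩
  simpa only [Real.rpow_natCast] using kernel_riemann_sum_B_general (Nat.cast_nonneg p)
    (fun x => (hM x).trans (le_max_left M 1)) hsupp (by lia) hb ω hu
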